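/- Let X be a finite set of n points in ℝ² with the L∞ metric, n ≥ 2. If no line induced by a pair of distinct points of X is universal, then the number of distinct lines induced by pairs of distinct points of X is at least ⌈n/2⌉. -/

import Mathlib

noncomputable section
open Classical

/-- The L∞ metric on ℝ². -/
def rhoInf (u v : ℝ × ℝ) : ℝ := max |u.1 - v.1| |u.2 - v.2|

/-- `z` is between `u` and `v` (w.r.t. the L∞ metric): the three points are
pairwise distinct and `ρ∞(u,v) = ρ∞(u,z) + ρ∞(z,v)`. -/
def MBtw (u z v : ℝ × ℝ) : Prop :=
  u ≠ z ∧ z ≠ v ∧ u ≠ v ∧ rhoInf u v = rhoInf u z + rhoInf z v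

/-- The line of `X` induced by distinct points `u, v`: all `z ∈ X` such that
`z ∈ {u,v}` or one of `u, v, z` is between the other two. -/
def lineThrough (X : Finset (ℝ × ℝ)) (u v : ℝ × ℝ) : Finset (ℝ × ℝ) :=
  X.filter fun z => z = u ∨ z = v ∨ MBtw u z v ∨ MBtw z u v ∨ MBtw u v z

/-- The number of distinct lines induced by pairs of distinct points of `X`. -/
def numLines (X : Finset (ℝ × ℝ)) : ℕ :=
  (((X ×ˢ X).filter fun p => p.1 ≠ p.2).image fun p => lineThrough X p.1 p.2).card

namespace LinfAux

variable {ι : Type}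

/-- `b` lies in the bounding box of `a` and `c`. -/
def Bx (x y : ι → ℝ) (a b c : ι) : Prop :=
  (x a ≤ x b ∧ x b ≤ x c ∨ x c ≤ x b ∧ x b ≤ x a) ∧
  (y a ≤ y b ∧ y b ≤ y c ∨ y c ≤ y b ∧ y b ≤ y a)

/-- collinearity in the L1 metric with coordinates `x`, `y`. -/
def Col (x y : ι → ℝ) (u v z : ι) : Prop := Bx x y u z v ∨ Bx x y z u v ∨ Bx x y u v z

def Same (X : Finset ι) (x y : ι → ℝ) (a b c d : ι) : Prop :=
  ∀ z ∈ X, (Col x y a b z ↔ Col x y c d z)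

theorem Same.symm {X : Finset ι} {x y : ι → ℝ} {a b c d : ι} (h : Same X x y a b c d) :
    Same X x y c d a b := fun z hz => (h z hz).symm

theorem Same.trans {X : Finset ι} {x y : ι → ℝ} {a b c d e f : ι} (h : Same X x y a b c d)
    (h' : Same X x y c d e f) :
    Same X x y a b e f := fun z hz => (h z hz).trans (h' z hz)

theorem Bx_neg (x y : ι → ℝ) (a b c : ι) : Bx x (fun i => - y i) a b c ↔ Bx x y a b c := by
  unfold Bx
  simp only [neg_le_neg_iff]
  tauto

theorem Col_neg (x y : ι → ℝ) (u v z : ι) : Col x (fun i => - y i) u v z ↔ Col x y u v z := by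
  unfold Col
  simp only [Bx_neg]

theorem Same_neg {X : Finset ι} {x y : ι → ℝ} {a b c d : ι} :
    Same X x (fun i => - y i) a b c d ↔ Same X x y a b c d := by
  unfold Same
  simp only [Col_neg]

theorem Bx_comm (x y : ι → ℝ) (a b c : ι) : Bx x y a b c ↔ Bx x y c b a := by
  unfold Bx
  tauto

theorem Col_comm (x y : ι → ℝ) (u v z : ι) : Col x y u v z ↔ Col x y v u z := by
  unfold Col
  rw [Bx_comm x y u z v, Bx_comm x y z u v, Bx_comm x y u v z]
  tauto

theorem Col_left (x y : ι → ℝ) (u v : ι) : Col x y u v u := by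
  left; unfold Bx
  rcases le_total (x u) (x v) with h | h <;> rcases le_total (y u) (y v) with h' | h' <;> simp [h, h']

theorem Col_right (x y : ι → ℝ) (u v : ι) : Col x y u v v := by
  rw [Col_comm]; exact Col_left x y v u

theorem colInc {x y : ι → ℝ} {s t : ι} (hx : x s < x t) (hy : y s < y t) (z : ι) :
    Col x y s t z ↔ (x z ≤ x s ∧ y z ≤ y s) ∨ (x s ≤ x z ∧ x z ≤ x t ∧ y s ≤ y z ∧ y z ≤ y t) ∨
      (x t ≤ x z ∧ y t ≤ y z) := by
  unfold Col Bx
  constructor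
  · grind
  · grind

theorem colDec {x y : ι → ℝ} {s t : ι} (hx : x s < x t) (hy : y t < y s) (z : ι) :
    Col x y s t z ↔ (x z ≤ x s ∧ y s ≤ y z) ∨ (x s ≤ x z ∧ x z ≤ x t ∧ y t ≤ y z ∧ y z ≤ y s) ∨
      (x t ≤ x z ∧ y z ≤ y t) := by
  unfold Col Bx
  constructor
  · grind
  · grind

theorem colVert {x y : ι → ℝ} {s t : ι} (hx : x s = x t) (hy : y s < y t) (z : ι) :
    Col x y s t z ↔ y z ≤ y s ∨ y t ≤ y z ∨ x z = x s := by
  unfold Col Bx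
  constructor
  · grind
  · grind

theorem colHor {x y : ι → ℝ} {s t : ι} (hx : x s < x t) (hy : y s = y t) (z : ι) :
    Col x y s t z ↔ x z ≤ x s ∨ x t ≤ x z ∨ y z = y s := by
  unfold Col Bx
  constructor
  · grind
  · grind

theorem lemT {x y : ι → ℝ} {s t a b : ι} (hx : x s < x t) (hy : y s < y t)
    (hab : x a < x b) (hab' : y b < y a) (ha : Col x y s t a) (hb : Col x y s t b) :
    (x b ≤ x s ∧ y a ≤ y s) ∨ (x s ≤ x a ∧ x b ≤ x t ∧ y s ≤ y b ∧ y a ≤ y t) ∨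
    (x t ≤ x a ∧ y t ≤ y b) := by
  rw [colInc hx hy] at ha hb
  grind

theorem lemT' {x y : ι → ℝ} {s t a b : ι} (hx : x s < x t) (hy : y t < y s)
    (hab : x a < x b) (hab' : y a < y b) (ha : Col x y s t a) (hb : Col x y s t b) :
    (x b ≤ x s ∧ y s ≤ y a) ∨ (x s ≤ x a ∧ x b ≤ x t ∧ y t ≤ y a ∧ y b ≤ y s) ∨
    (x t ≤ x a ∧ y b ≤ y t) := by
  rw [colDec hx hy] at ha hb
  grind

/-- an increasing and a decreasing pair with the same line span the same rectangle -/
theorem opp {X : Finset ι} {x y : ι → ℝ} {s t s' t' : ι} (hx : x s < x t) (hy : y s < y t)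
    (hx' : x s' < x t') (hy' : y t' < y s') (hs : s ∈ X) (ht : t ∈ X) (hs' : s' ∈ X) (ht' : t' ∈ X)
    (h : Same X x y s t s' t') : x s = x s' ∧ x t = x t' ∧ y s = y t' ∧ y t = y s' := by
  have h1 := lemT hx hy hx' hy' ((h _ hs').2 (Col_left ..)) ((h _ ht').2 (Col_right ..))
  have h2 := lemT' hx' hy' hx hy ((h _ hs).1 (Col_left ..)) ((h _ ht).1 (Col_right ..))
  grind

structure AdjE (X : Finset ι) (x y : ι → ℝ) (p q : ι) : Prop where
  hp : p ∈ X
  hq : q ∈ X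
  hx : x p < x q
  hy : y p ≠ y q
  adj : ∀ w ∈ X, x w ≤ x p ∨ x q ≤ x w
  box : ∀ w ∈ X, Bx x y p w q → w = p ∨ w = q

theorem AdjE.neg {X : Finset ι} {x y : ι → ℝ} {p q : ι} (h : AdjE X x y p q) :
    AdjE X x (fun i => - y i) p q :=
  ⟨h.hp, h.hq, h.hx, by simpa using h.hy, h.adj, fun w hw hb => h.box w hw ((Bx_neg ..).1 hb)⟩

theorem AdjE.col {X : Finset ι} {x y : ι → ℝ} {p q w : ι} (h : AdjE X x y p q) (hy : y p < y q)
    (hw : w ∈ X) :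
    Col x y p q w ↔ (x w ≤ x p ∧ y w ≤ y p) ∨ (x q ≤ x w ∧ y q ≤ y w) := by
  rw [colInc h.hx hy]
  have hx := h.hx
  have := h.box w hw
  unfold Bx at this
  constructor
  · rintro (h1 | h1 | h1)
    · exact Or.inl h1
    · rcases this ⟨Or.inl ⟨h1.1, h1.2.1⟩, Or.inl h1.2.2⟩ with rfl | rfl
      · simp
      · simp
    · exact Or.inr h1
  · tauto

/-- A rectangle whose vertical sides are consecutive in their columns. -/
structure Rc (X : Finset ι) (x y : ι → ℝ) (v1 u1 v2 u2 : ι) : Prop where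
  m1 : v1 ∈ X
  m2 : u1 ∈ X
  m3 : v2 ∈ X
  m4 : u2 ∈ X
  x1 : x u1 = x v1
  x2 : x u2 = x v2
  xl : x v1 < x v2
  y1 : y v2 = y v1
  y2 : y u2 = y u1
  yl : y v1 < y u1
  c1 : ∀ w ∈ X, x w = x v1 → y w ≤ y v1 ∨ y u1 ≤ y w
  c2 : ∀ w ∈ X, x w = x v2 → y w ≤ y v1 ∨ y u1 ≤ y w

theorem Rc.neg {X : Finset ι} {x y : ι → ℝ} {v1 u1 v2 u2 : ι} (h : Rc X x y v1 u1 v2 u2) :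
    Rc X x (fun i => - y i) u1 v1 u2 v2 := by
  obtain ⟨m1, m2, m3, m4, a1, a2, a3, a4, a5, a6, a7, a8⟩ := h
  refine ⟨m2, m1, m4, m3, by grind, by grind, by grind, by grind, by grind, by grind, ?_, ?_⟩
  · intro w hw hh
    have := a7 w hw (by grind)
    grind
  · intro w hw hh
    have := a8 w hw (by grind)
    grind

theorem AA_orient {X : Finset ι} {x y : ι → ℝ} {p q p' q' : ι} (h : AdjE X x y p q)
    (h' : AdjE X x y p' q') (hy : y p < y q) (hs : Same X x y p q p' q') : y p' < y q' := by
  by_contra hcon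
  have hlt : y q' < y p' := lt_of_le_of_ne (not_lt.1 hcon) (Ne.symm h'.hy)
  have hh := opp h.hx hy h'.hx hlt h.hp h.hq h'.hp h'.hq hs
  have := h.box p' h'.hp (by unfold Bx; grind)
  have := h.hx
  grind

theorem AA_order {X : Finset ι} {x y : ι → ℝ} {p q p' q' : ι} (h : AdjE X x y p q)
    (h' : AdjE X x y p' q') (hy : y p < y q) (hs : Same X x y p q p' q')
    (hl : x p < x p') : x q ≤ x p' ∧ y q ≤ y p' := by
  have := (h.col hy h'.hp).1 ((hs _ h'.hp).2 (Col_left ..))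
  grind

theorem farE {X : Finset ι} {x y : ι → ℝ} {s t s' t' z : ι} (hx : x s < x t) (hy : y s < y t)
    (hx' : x s' < x t') (hy' : y s' < y t') (hs : Same X x y s t s' t') (hz : z ∈ X)
    (h1 : x t ≤ x s') (h2 : y t ≤ y s') (hn : ¬ Col x y s t z) :
    (x s' < x z ∧ y z < y t) ∨ (y s' < y z ∧ x z < x t) := by
  have hn' : ¬ Col x y s' t' z := fun h => hn ((hs z hz).2 h)
  rw [colInc hx hy] at hn
  rw [colInc hx' hy'] at hn'
  grind

/-- Every coincidence with the increasing diagonal of a rectangle is of block type. -/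
theorem Rc_coincA {X : Finset ι} {x y : ι → ℝ} {v1 u1 v2 u2 p q : ι} (h : Rc X x y v1 u1 v2 u2)
    (h' : AdjE X x y p q) (hs : Same X x y v1 u2 p q) :
    y p < y q ∧ ((x u2 ≤ x p ∧ y u2 ≤ y p) ∨ (x q ≤ x v1 ∧ y q ≤ y v1)) := by
  obtain ⟨m1, m2, m3, m4, a1, a2, a3, a4, a5, a6, a7, a8⟩ := h
  have hx : x v1 < x u2 := by grind
  have hy : y v1 < y u2 := by grind
  have hpq : y p < y q := by
    by_contra hcon
    have hlt : y q < y p := lt_of_le_of_ne (not_lt.1 hcon) (Ne.symm h'.hy)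
    have hh := opp hx hy h'.hx hlt m1 m4 h'.hp h'.hq hs
    have := h'.box v1 m1 (by unfold Bx; grind)
    grind
  refine ⟨hpq, ?_⟩
  have c1 : Col x y p q u1 := (hs _ m2).1 (by rw [colInc hx hy]; grind)
  have c2 : Col x y p q v2 := (hs _ m3).1 (by rw [colInc hx hy]; grind)
  rw [h'.col hpq m2] at c1
  rw [h'.col hpq m3] at c2
  have := h'.hx
  grind

theorem Rc_coincR {X : Finset ι} {x y : ι → ℝ} {v1 u1 v2 u2 v1' u1' v2' u2' : ι}
    (h : Rc X x y v1 u1 v2 u2) (h' : Rc X x y v1' u1' v2' u2') (hs : Same X x y v1 u2 v1' u2')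
    (hne : ¬ (x v1 = x v1' ∧ x v2 = x v2' ∧ y v1 = y v1' ∧ y u1 = y u1')) :
    ((x u2 ≤ x v1' ∧ y u2 ≤ y v1') ∨ (x u2' ≤ x v1 ∧ y u2' ≤ y v1)) := by
  obtain ⟨m1, m2, m3, m4, a1, a2, a3, a4, a5, a6, -, -⟩ := h
  obtain ⟨m1', m2', m3', m4', a1', a2', a3', a4', a5', a6', -, -⟩ := h'
  have hx : x v1 < x u2 := by grind
  have hy : y v1 < y u2 := by grind
  have hx' : x v1' < x u2' := by grind
  have hy' : y v1' < y u2' := by grind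
  have k1 := lemT (a := u1) (b := v2) hx' hy' (by grind) (by grind)
    ((hs _ m2).1 (by rw [colInc hx hy]; grind)) ((hs _ m3).1 (by rw [colInc hx hy]; grind))
  have k2 := lemT (a := u1') (b := v2') hx hy (by grind) (by grind)
    ((hs _ m2').2 (by rw [colInc hx' hy']; grind)) ((hs _ m3').2 (by rw [colInc hx' hy']; grind))
  grind

theorem Rc_coincR' {X : Finset ι} {x y : ι → ℝ} {v1 u1 v2 u2 v1' u1' v2' u2' : ι}
    (h : Rc X x y v1 u1 v2 u2) (h' : Rc X x y v1' u1' v2' u2') (hs : Same X x y v1 u2 u1' v2') :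
    x v1 = x v1' ∧ x v2 = x v2' ∧ y v1 = y v1' ∧ y u1 = y u1' := by
  obtain ⟨m1, m2, m3, m4, a1, a2, a3, a4, a5, a6, -, -⟩ := h
  obtain ⟨m1', m2', m3', m4', a1', a2', a3', a4', a5', a6', -, -⟩ := h'
  have := opp (by grind) (by grind) (by grind) (by grind) m1 m4 m2' m3' hs
  grind

/-- The line `a b` (a diagonal of the rectangle) is not the line of another object. -/
def RGood (X : Finset ι) (x y : ι → ℝ) (v1 u1 v2 a b : ι) : Prop :=
  (∀ p q, AdjE X x y p q → ¬ Same X x y a b p q) ∧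
  ∀ v1' u1' v2' u2', Rc X x y v1' u1' v2' u2' →
    ¬ (x v1 = x v1' ∧ x v2 = x v2' ∧ y v1 = y v1' ∧ y u1 = y u1') →
    ¬ Same X x y a b v1' u2' ∧ ¬ Same X x y a b u1' v2'
end LinfAux
namespace LinfAux
variable {ι : Type}

theorem RGood_inc {X : Finset ι} {x y : ι → ℝ} {v1 u1 v2 u2 h w : ι} (R : Rc X x y v1 u1 v2 u2)
    (h1 : h ∈ X) (h2 : ¬ Col x y v1 u2 h) (h3 : x h ≤ x u2) (h4 : y h ≤ y u2)
    (w1 : w ∈ X) (w2 : ¬ Col x y v1 u2 w) (w3 : x v1 ≤ x w) (w4 : y v1 ≤ y w) :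
    RGood X x y v1 u1 v2 v1 u2 := by
  have hx : x v1 < x u2 := by have := R.xl; have := R.x2; grind
  have hy : y v1 < y u2 := by have := R.yl; have := R.y2; grind
  refine ⟨?_, ?_⟩
  · intro p q A hs
    obtain ⟨hpq, hh | hh⟩ := Rc_coincA R A hs
    · have := farE hx hy A.hx hpq hs h1 hh.1 hh.2 h2
      grind
    · have := farE A.hx hpq hx hy hs.symm w1 hh.1 hh.2 (fun hc => w2 ((hs _ w1).2 hc))
      grind
  · intro v1' u1' v2' u2' R' hne
    refine ⟨?_, ?_⟩
    · intro hs
      have hx' : x v1' < x u2' := by have := R'.xl; have := R'.x2; grind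
      have hy' : y v1' < y u2' := by have := R'.yl; have := R'.y2; grind
      rcases Rc_coincR R R' hs hne with hh | hh
      · have := farE hx hy hx' hy' hs h1 hh.1 hh.2 h2
        grind
      · have := farE hx' hy' hx hy hs.symm w1 hh.1 hh.2 (fun hc => w2 ((hs _ w1).2 hc))
        grind
    · intro hs
      exact hne (Rc_coincR' R R' hs)

theorem RGood_flip {X : Finset ι} {x y : ι → ℝ} {v1 u1 v2 u2 : ι} (R : Rc X x y v1 u1 v2 u2)
    (h : RGood X x (fun i => - y i) u1 v1 u2 u1 v2) : RGood X x y v1 u1 v2 u1 v2 := by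
  refine ⟨fun p q A hs => h.1 p q A.neg (Same_neg.2 hs), ?_⟩
  intro v1' u1' v2' u2' R' hne
  have := h.2 u1' v1' u2' v2' R'.neg (by
    have := R.x1; have := R.x2; have := R'.x1; have := R'.x2; grind)
  simp only [Same_neg] at this
  exact ⟨this.2, this.1⟩

/-- rectangles with empty interior have a good diagonal -/
theorem D_iii {X : Finset ι} {x y : ι → ℝ}
    (NU : ∀ u ∈ X, ∀ v ∈ X, u ≠ v → ∃ w ∈ X, ¬ Col x y u v w)
    {v1 u1 v2 u2 : ι} (R : Rc X x y v1 u1 v2 u2)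
    (hem : ∀ g ∈ X, x v1 < x g → x g < x v2 → y v1 < y g → y g < y u1 → False) :
    RGood X x y v1 u1 v2 v1 u2 ∨ RGood X x y v1 u1 v2 u1 v2 := by
  have ⟨m1, m2, m3, m4, a1, a2, a3, a4, a5, a6, a7, a8⟩ := R
  obtain ⟨w, hw, hw'⟩ := NU v2 m3 u2 m4 (by grind)
  rw [colVert (by grind) (by grind)] at hw'
  have hw1 := a7 w hw
  have hw2 := a8 w hw
  have hw3 := hem w hw
  obtain ⟨h, hh, hmin⟩ := Finset.exists_min_image (X.filter fun i => x v1 < x i) x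
    ⟨v2, by simp [m3, a3]⟩
  simp only [Finset.mem_filter, and_imp] at hh hmin
  obtain ⟨hX, hh⟩ := hh
  obtain ⟨k, hk, hk'⟩ := NU v1 m1 v2 m3 (by grind)
  rw [colHor (by grind) (by grind)] at hk'
  have hk1 := hmin k hk (by grind)
  have hy1 : y h ≠ y v1 := by
    intro he
    obtain ⟨k, hk, hk'⟩ := NU v1 m1 h hX (by grind)
    rw [colHor (by grind) (by grind)] at hk'
    have := hmin k hk
    grind
  have hy2 : y h ≠ y u1 := by
    intro he
    obtain ⟨k, hk, hk'⟩ := NU u1 m2 h hX (by grind)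
    rw [colHor (by grind) (by grind)] at hk'
    have := hmin k hk
    grind
  have hh3 := hem h hX
  have cI := fun z => @colInc ι x y v1 u2 (by grind) (by grind) z
  have hpos : (y h < y v1 ∨ y u1 < y h) ∧ (x w < x v1 ∨ x v2 < x w) := by grind
  have nI : ¬ Col x y v1 u2 h ∧ ¬ Col x y v1 u2 w := by
    rw [cI, cI]; grind
  have R' := R.neg
  have cD := fun z => @colInc ι x (fun i => - y i) u1 v2 (by grind) (by grind) z
  have nD : ¬ Col x (fun i => - y i) u1 v2 h ∧ ¬ Col x (fun i => - y i) u1 v2 w := by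
    rw [cD, cD]; grind
  rcases hpos with ⟨h1 | h1, h2 | h2⟩
  · right
    exact RGood_flip R (RGood_inc R' hw nD.2 (by grind) (by grind) hX nD.1 (by grind) (by grind))
  · left
    exact RGood_inc R hX nI.1 (by grind) (by grind) hw nI.2 (by grind) (by grind)
  · left
    exact RGood_inc R hw nI.2 (by grind) (by grind) hX nI.1 (by grind) (by grind)
  · right
    exact RGood_flip R (RGood_inc R' hX nD.1 (by grind) (by grind) hw nD.2 (by grind) (by grind))

/-- no rectangle of the same height to the left of the rectangle's left column -/
def First (X : Finset ι) (x y : ι → ℝ) (v1 u1 : ι) : Prop :=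
  ∀ v ∈ X, ∀ u ∈ X, x u = x v → y v = y v1 → y u = y u1 → x v < x v1 →
    ∃ k ∈ X, x k = x v ∧ y v < y k ∧ y k < y u

theorem D_ii {X : Finset ι} {x y : ι → ℝ}
    {v1 u1 v2 u2 w1 t1 w2 t2 : ι} (R : Rc X x y v1 u1 v2 u2) (Q : Rc X x y w1 t1 w2 t2)
    (hx1 : x w1 = x v1) (hx2 : x w2 = x v2) (hl : y w1 < y v1) (hF : First X x y w1 t1) :
    RGood X x y v1 u1 v2 v1 u2 := by
  have hx : x v1 < x u2 := by have := R.xl; have := R.x2; grind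
  have hy : y v1 < y u2 := by have := R.yl; have := R.y2; grind
  have hxl := R.xl
  have hr2 := R.x2
  have hy2 := R.y2
  have hqy := Q.y1
  have hqyl := Q.yl
  have hn : ¬ Col x y v1 u2 w2 := by rw [colInc hx hy]; grind
  have hc : Col x y v1 u2 w1 := by rw [colInc hx hy]; grind
  have ht : y t1 ≤ y v1 := by
    have := Q.c1 v1 R.m1 hx1.symm; grind
  refine ⟨?_, ?_⟩
  · intro p q A hs
    obtain ⟨hpq, hh | hh⟩ := Rc_coincA R A hs
    · have := farE hx hy A.hx hpq hs Q.m3 hh.1 hh.2 hn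
      grind
    · have := farE A.hx hpq hx hy hs.symm Q.m3 hh.1 hh.2 (fun hc => hn ((hs _ Q.m3).2 hc))
      have h3 := (hs _ Q.m1).1 hc
      rw [A.col hpq Q.m1] at h3
      have := A.hx
      grind
  · intro v1' u1' v2' u2' R' hne
    refine ⟨?_, ?_⟩
    · intro hs
      have ⟨m1', m2', m3', m4', a1', a2', a3', a4', a5', a6', a7', a8'⟩ := R'
      have hx' : x v1' < x u2' := by grind
      have hy' : y v1' < y u2' := by grind
      rcases Rc_coincR R R' hs hne with hh | hh
      · have := farE hx hy hx' hy' hs Q.m3 hh.1 hh.2 hn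
        grind
      · have := farE hx' hy' hx hy hs.symm Q.m3 hh.1 hh.2 (fun hc => hn ((hs _ Q.m3).2 hc))
        have h3 := (hs _ Q.m1).1 hc
        rw [colInc hx' hy'] at h3
        have e1 : x v2' = x v1 := by grind
        have b1 := a8' w1 Q.m1 (by grind)
        have e2 : y w1 = y v1' := by grind
        have b2 := a8' t1 Q.m2 (by have := Q.x1; grind)
        have b3 := Q.c1 u2' m4' (by grind)
        have e3 : y t1 = y u1' := by grind
        obtain ⟨k, k1, k2, k3, k4⟩ := hF v1' m1' u1' m2' a1' e2.symm e3.symm (by grind)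
        have := a7' k k1 k2
        grind
    · intro hs
      exact hne (Rc_coincR' R R' hs)
end LinfAux
namespace LinfAux
variable {ι : Type}

structure ZS (X : Finset ι) (x y : ι → ℝ) (p q p' q' z : ι) : Prop where
  A : AdjE X x y p q
  A' : AdjE X x y p' q'
  inc : y p < y q
  inc' : y p' < y q'
  same : Same X x y p q p' q'
  o1 : x q ≤ x p'
  o2 : y q ≤ y p'
  hz : z ∈ X
  nz : ¬ Col x y p q z
  lm : ∀ w ∈ X, ¬ Col x y p q w → x z ≤ x w

theorem ZS.kst {X : Finset ι} {x y : ι → ℝ} {p q p' q' z w : ι} (h : ZS X x y p q p' q' z)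
    (hw : w ∈ X) :
    (x w ≤ x p ∧ y w ≤ y p) ∨ (x q ≤ x w ∧ x w ≤ x p' ∧ y q ≤ y w ∧ y w ≤ y p') ∨
    (x q' ≤ x w ∧ y q' ≤ y w) ∨ ((¬ Col x y p q w) ∧ x w ≤ x p ∧ y p' < y w) ∨
    ((¬ Col x y p q w) ∧ x q' ≤ x w ∧ y w < y q) := by
  have c1 := h.A.col h.inc hw
  have c2 := h.A'.col h.inc' hw
  have a1 := h.A.adj w hw
  have a2 := h.A'.adj w hw
  have := h.same w hw
  have := h.A.hx
  have := h.A'.hx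
  have := h.inc
  have := h.inc'
  have := h.o1
  have := h.o2
  by_cases hc : Col x y p q w
  · grind
  · grind

theorem ZS.zpos {X : Finset ι} {x y : ι → ℝ} {p q p' q' z : ι} (h : ZS X x y p q p' q' z) :
    (x z < x q ∧ y p' < y z) ∨ (x p' < x z ∧ y z < y q) := by
  have h1 := h.kst h.hz
  have hn := h.nz
  have c1 := h.A.col h.inc h.hz
  have := h.A.hx
  have := h.A'.hx
  have := h.inc
  have := h.inc'
  have := h.o1
  have := h.o2
  grind

/-- explicit form of the line `z q` -/
theorem ZS.col {X : Finset ι} {x y : ι → ℝ} {p q p' q' z : ι} (h : ZS X x y p q p' q' z) (w : ι) :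
    (x z < x q ∧ y p' < y z ∧ (Col x y z q w ↔ (x w ≤ x z ∧ y z ≤ y w) ∨
      (x z ≤ x w ∧ x w ≤ x q ∧ y q ≤ y w ∧ y w ≤ y z) ∨ (x q ≤ x w ∧ y w ≤ y q))) ∨
    (x p' < x z ∧ y z < y q ∧ (Col x y z q w ↔ (x w ≤ x q ∧ y q ≤ y w) ∨
      (x q ≤ x w ∧ x w ≤ x z ∧ y z ≤ y w ∧ y w ≤ y q) ∨ (x z ≤ x w ∧ y w ≤ y z))) := by
  have := h.o1
  have := h.o2
  rcases h.zpos with h1 | h1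
  · left
    exact ⟨h1.1, h1.2, colDec (by grind) (by grind) w⟩
  · right
    rw [Col_comm]
    exact ⟨h1.1, h1.2, colDec (by grind) (by grind) w⟩

theorem ZS.notp {X : Finset ι} {x y : ι → ℝ} {p q p' q' z w : ι} (h : ZS X x y p q p' q' z)
    (hw : (x w < x q ∧ y w < y q) ∨ (x q < x w ∧ y q < y w)) : ¬ Col x y z q w := by
  have := h.col w
  have := h.o1
  have := h.o2
  grind

theorem ZA {X : Finset ι} {x y : ι → ℝ}
    {p q p' q' z p1 q1 : ι} (h : ZS X x y p q p' q' z)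
    (F : AdjE X x y p1 q1) (U1 : x p1 = x p' → p1 = p' ∧ q1 = q')
    (U2 : x q1 = x q → p1 = p ∧ q1 = q) : ¬ Same X x y z q p1 q1 := by
  intro hs
  have hqX := h.A.hq
  have hx1 := h.A.hx
  have hx2 := h.A'.hx
  have hy1 := h.inc
  have hy2 := h.inc'
  have o1 := h.o1
  have o2 := h.o2
  have hFx := F.hx
  by_cases hi : y p1 < y q1
  · have hb1 := F.box z h.hz
    have hb2 := F.box q h.A.hq
    unfold Bx at hb1 hb2
    rcases h.zpos with hz | hz
    · have := opp F.hx hi (s' := z) (t' := q) (by grind) (by grind) F.hp F.hq h.hz h.A.hq hs.symm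
      grind
    · have := opp F.hx hi (s' := q) (t' := z) (by grind) (by grind) F.hp F.hq h.A.hq h.hz
        (fun w hw => by rw [← hs w hw, Col_comm])
      grind
  · have hd : y q1 < y p1 := lt_of_le_of_ne (not_lt.1 hi) (Ne.symm F.hy)
    have cF : ∀ w ∈ X, Col x y p1 q1 w ↔ (x w ≤ x p1 ∧ y p1 ≤ y w) ∨ (x q1 ≤ x w ∧ y w ≤ y q1) := by
      intro w hw
      have := F.neg.col (by grind) hw
      rw [Col_neg] at this
      grind
    have c1 := (cF q hqX).1 ((hs _ hqX).1 (Col_right ..))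
    have n1 : ¬ ((x p ≤ x p1 ∧ y p1 ≤ y p) ∨ (x q1 ≤ x p ∧ y p ≤ y q1)) := by
      rw [← cF p h.A.hp, ← hs p h.A.hp]
      exact h.notp (Or.inl ⟨hx1, hy1⟩)
    have n2 : ¬ ((x q' ≤ x p1 ∧ y p1 ≤ y q') ∨ (x q1 ≤ x q' ∧ y q' ≤ y q1)) := by
      rw [← cF q' h.A'.hq, ← hs q' h.A'.hq]
      exact h.notp (Or.inr ⟨by grind, by grind⟩)
    have k1 := h.kst F.hp
    have k2 := h.kst F.hq
    have ad := F.adj p' h.A'.hp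
    have ad1 := F.adj q h.A.hq
    have ad2 := h.A.adj p1 F.hp
    have ad3 := h.A'.adj q1 F.hq
    grind

theorem ZD_inc {X : Finset ι} {x y : ι → ℝ} 
    {p q p' q' z v1 u1 v2 u2 : ι} (h : ZS X x y p q p' q' z)
    (R : Rc X x y v1 u1 v2 u2) : ¬ Same X x y z q v1 u2 := by
  intro hs
  have ⟨m1, m2, m3, m4, a1, a2, a3, a4, a5, a6, a7, a8⟩ := R
  have e1 : x v1 < x u2 := by grind
  have e2 : y v1 < y u2 := by grind
  have hx1 := h.A.hx
  have hx2 := h.A'.hx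
  have hy1 := h.inc
  have hy2 := h.inc'
  have o1 := h.o1
  have o2 := h.o2
  have k1 := h.kst m1
  have k2 := h.kst m2
  have k3 := h.kst m3
  have k4 := h.kst m4
  rcases h.zpos with hz | hz
  · have := opp e1 e2 (s' := z) (t' := q) (by grind) (by grind)
      m1 m4 h.hz h.A.hq hs.symm
    grind
  · have := opp e1 e2 (s' := q) (t' := z) (by grind) (by grind)
      m1 m4 h.A.hq h.hz (fun w hw => by rw [← hs w hw, Col_comm])
    grind

theorem ZD_dec {X : Finset ι} {x y : ι → ℝ} 
    {p q p' q' z v1 u1 v2 u2 : ι} (h : ZS X x y p q p' q' z)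
    (R : Rc X x y v1 u1 v2 u2) : ¬ Same X x y z q u1 v2 := by
  intro hs
  have ⟨m1, m2, m3, m4, a1, a2, a3, a4, a5, a6, a7, a8⟩ := R
  have hx1 := h.A.hx
  have hx2 := h.A'.hx
  have hy1 := h.inc
  have hy2 := h.inc'
  have o1 := h.o1
  have o2 := h.o2
  have k1 := h.kst m1
  have k2 := h.kst m2
  have k3 := h.kst m3
  have k4 := h.kst m4
  have cF := fun w => @colDec ι x y u1 v2 (by grind) (by grind) w
  have c1 := (hs _ h.A.hq).1 (Col_right ..)
  have n1 : ¬ Col x y u1 v2 p := by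
      rw [← hs p h.A.hp]
      exact h.notp (Or.inl ⟨hx1, hy1⟩)
  have n2 : ¬ Col x y u1 v2 q' := by
      rw [← hs q' h.A'.hq]
      exact h.notp (Or.inr ⟨by grind, by grind⟩)
  have cv1 : Col x y u1 v2 v1 := by rw [cF]; grind
  have cu2 : Col x y u1 v2 u2 := by rw [cF]; grind
  rw [← hs _ m1] at cv1
  rw [← hs _ m4] at cu2
  have d1 : ¬ (x v1 < x q ∧ y v1 < y q) := fun hh => h.notp (Or.inl hh) cv1
  have d2 : ¬ (x q < x u2 ∧ y q < y u2) := fun hh => h.notp (Or.inr hh) cu2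
  rw [cF] at c1 n1 n2
  grind

theorem ZZ_same {X : Finset ι} {x y : ι → ℝ} 
    {p q p' q' z p1 q1 p1' q1' z1 : ι} (h : ZS X x y p q p' q' z) (h1 : ZS X x y p1 q1 p1' q1' z1)
    (hl : x q < x q1) : ¬ Same X x y z q z1 q1 := by
  intro hs
  have hx1 := h.A.hx
  have hx2 := h.A'.hx
  have hy1 := h.inc
  have hy2 := h.inc'
  have o1 := h.o1
  have o2 := h.o2
  have fx1 := h1.A.hx
  have fx2 := h1.A'.hx
  have fy1 := h1.inc
  have fy2 := h1.inc'
  have f1 := h1.o1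
  have f2 := h1.o2
  have n1 : ¬ Col x y z q p1 := by
    rw [hs _ h1.A.hp]
    exact h1.notp (Or.inl ⟨fx1, fy1⟩)
  have c1 : Col x y z q q1 := (hs _ h1.A.hq).2 (Col_right ..)
  have c2 := h.col p1
  have c3 := h.col q1
  have k1 := h.kst h1.A.hp
  have k2 := h.kst h1.A.hq
  have lm := h.lm p1 h1.A.hp
  have ad := h1.A.adj q h.A.hq
  grind

theorem ZZ_opp {X : Finset ι} {x y : ι → ℝ} 
    {p q p' q' z p1 q1 p1' q1' z1 : ι} (h : ZS X x y p q p' q' z)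
    (h1 : ZS X x (fun i => - y i) p1 q1 p1' q1' z1)
    (hl : x q ≠ x q1) : ¬ Same X x y z q z1 q1 := by
  intro hs
  have hz1 := h.zpos
  have hz2 := h1.zpos
  have hx1 := h.A.hx
  have hx2 := h.A'.hx
  have hy1 := h.inc
  have hy2 := h.inc'
  have o1 := h.o1
  have o2 := h.o2
  have fx1 := h1.A.hx
  have fx2 := h1.A'.hx
  have fy1 := h1.inc
  have fy2 := h1.inc'
  have f1 := h1.o1
  have f2 := h1.o2
  have k2 := h.kst h1.A.hq
  have k3 := h.kst h1.hz
  have k4 := h1.kst h.A.hq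
  have k5 := h1.kst h.hz
  have s1 : Same X x y z q q1 z1 := fun w hw => by rw [hs w hw, Col_comm]
  have s2 : Same X x y q z z1 q1 := fun w hw => by rw [← hs w hw, Col_comm]
  have s3 : Same X x y q z q1 z1 := fun w hw => by rw [Col_comm, hs w hw, Col_comm]
  rcases hz1 with hz | hz <;> rcases hz2 with hz' | hz'
  · have := opp (by grind) (by grind) (by grind) (by grind) h1.hz h1.A.hq h.hz h.A.hq hs.symm
    grind
  · have := opp (by grind) (by grind) (by grind) (by grind) h1.A.hq h1.hz h.hz h.A.hq s1.symm
    grind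
  · have := opp (by grind) (by grind) (by grind) (by grind) h1.hz h1.A.hq h.A.hq h.hz s2.symm
    grind
  · have := opp (by grind) (by grind) (by grind) (by grind) h1.A.hq h1.hz h.A.hq h.hz s3.symm
    grind

/-- a horizontal side of a rectangle with an interior point is not a monotone line -/
theorem N_mono {X : Finset ι} {x y : ι → ℝ} 
    {v1 u1 v2 u2 g s t : ι} (R : Rc X x y v1 u1 v2 u2) (hg : g ∈ X)
    (g1 : x v1 < x g) (g2 : x g < x v2) (g3 : y v1 < y g) (g4 : y g < y u1)
    (hx : x s < x t) (hy : y s < y t) : ¬ Same X x y v1 v2 s t := by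
  intro hs
  have ⟨m1, m2, m3, m4, a1, a2, a3, a4, a5, a6, a7, a8⟩ := R
  have cF := fun w => @colHor ι x y v1 v2 (by grind) (by grind) w
  have n : ¬ Col x y s t g := by rw [← hs g hg, cF]; grind
  have := lemT (a := u1) (b := v2) hx hy (by grind) (by grind) 
    ((hs _ m2).1 (by rw [cF]; grind)) ((hs _ m3).1 (by rw [cF]; grind))
  rw [colInc hx hy] at n
  grind

theorem N_mono' {X : Finset ι} {x y : ι → ℝ} 
    {v1 u1 v2 u2 g s t : ι} (R : Rc X x y v1 u1 v2 u2) (hg : g ∈ X)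
    (g1 : x v1 < x g) (g2 : x g < x v2) (g3 : y v1 < y g) (g4 : y g < y u1)
    (hx : x s < x t) (hy : y t < y s) : ¬ Same X x y v1 v2 s t := by
  intro hs
  have ⟨m1, m2, m3, m4, a1, a2, a3, a4, a5, a6, a7, a8⟩ := R
  have cF := fun w => @colHor ι x y v1 v2 (by grind) (by grind) w
  have n : ¬ Col x y s t g := by rw [← hs g hg, cF]; grind
  have := lemT' (a := v1) (b := u2) hx hy (by grind) (by grind) 
    ((hs _ m1).1 (by rw [cF]; grind)) ((hs _ m4).1 (by rw [cF]; grind))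
  rw [colDec hx hy] at n
  grind

theorem N_N {X : Finset ι} {x y : ι → ℝ} 
    {v1 u1 v2 u2 g v1' u1' v2' u2' g' : ι} (R : Rc X x y v1 u1 v2 u2) (hg : g ∈ X)
    (g1 : x v1 < x g) (g2 : x g < x v2) (g3 : y v1 < y g) (g4 : y g < y u1)
    (R' : Rc X x y v1' u1' v2' u2') (hg' : g' ∈ X)
    (g1' : x v1' < x g') (g2' : x g' < x v2') (g3' : y v1' < y g') (g4' : y g' < y u1')
    (hs : Same X x y v1 v2 v1' v2') : x v1 = x v1' ∧ x v2 = x v2' := by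
  have ⟨m1, m2, m3, m4, a1, a2, a3, a4, a5, a6, a7, a8⟩ := R
  have ⟨m1', m2', m3', m4', a1', a2', a3', a4', a5', a6', a7', a8'⟩ := R'
  have cF := fun w => @colHor ι x y v1 v2 (by grind) (by grind) w
  have cF' := fun w => @colHor ι x y v1' v2' (by grind) (by grind) w
  have e : ∀ w ∈ X, (x w ≤ x v1 ∨ x v2 ≤ x w ∨ y w = y v1) ↔ 
      (x w ≤ x v1' ∨ x v2' ≤ x w ∨ y w = y v1') := by
    intro w hw
    rw [← cF, ← cF', hs w hw]
  have e1 := e _ m1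
  have e2 := e _ m2
  have e3 := e _ m3
  have e4 := e _ m4
  have e1' := e _ m1'
  have e2' := e _ m2'
  have e3' := e _ m3'
  have e4' := e _ m4'
  have e5 := e _ hg
  have e6 := e _ hg'
  grind
end LinfAux
namespace LinfAux
variable {ι : Type}

theorem Same.swapR {X : Finset ι} {x y : ι → ℝ} {a b c d : ι} (h : Same X x y a b c d) :
    Same X x y a b d c := fun w hw => by rw [h w hw, Col_comm]

theorem N_gen {X : Finset ι} {x y : ι → ℝ}
    {v1 u1 v2 u2 g s t : ι} (R : Rc X x y v1 u1 v2 u2) (hg : g ∈ X)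
    (g1 : x v1 < x g) (g2 : x g < x v2) (g3 : y v1 < y g) (g4 : y g < y u1)
    (hx : x s ≠ x t) (hy : y s ≠ y t) : ¬ Same X x y v1 v2 s t := by
  intro hs
  rcases lt_or_gt_of_ne hx with h1 | h1 <;> rcases lt_or_gt_of_ne hy with h2 | h2
  · exact N_mono R hg g1 g2 g3 g4 h1 h2 hs
  · exact N_mono' R hg g1 g2 g3 g4 h1 h2 hs
  · exact N_mono' R hg g1 g2 g3 g4 h1 h2 hs.swapR
  · exact N_mono R hg g1 g2 g3 g4 h1 h2 hs.swapR

structure Ctx (X : Finset ι) (x y : ι → ℝ) (e1 e2 V1 U1 U2 : ι → ι) (A D : ι → Prop) : Prop where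
  inj : ∀ a ∈ X, ∀ b ∈ X, x a = x b → y a = y b → a = b
  NU : ∀ u ∈ X, ∀ v ∈ X, u ≠ v → ∃ w ∈ X, ¬ Col x y u v w
  hA : ∀ w, A w → AdjE X x y (e1 w) (e2 w)
  hAx : ∀ w, A w → x (e1 w) = x w
  hAu : ∀ w w', A w → A w' → x w = x w' → w = w'
  hD : ∀ w, D w → Rc X x y (V1 w) (U1 w) w (U2 w)
  hDF : ∀ w, D w → First X x y (V1 w) (U1 w)

section
variable {X : Finset ι} {x y : ι → ℝ} {e1 e2 V1 U1 U2 : ι → ι} {A D : ι → Prop}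

theorem Ctx.e2inj (C : Ctx X x y e1 e2 V1 U1 U2 A D) {w w' : ι} (h : A w) (h' : A w')
    (he : x (e2 w) = x (e2 w')) : w = w' := by
  have a := C.hA w h
  have a' := C.hA w' h'
  have b := C.hAx w h
  have b' := C.hAx w' h'
  have := a.adj _ a'.hp
  have := a'.adj _ a.hp
  have := a.hx
  have := a'.hx
  exact C.hAu w w' h h' (by grind)

def S1 (X : Finset ι) (x y : ι → ℝ) (e1 e2 : ι → ι) (A : ι → Prop) (w a b : ι) : Prop :=
  A w ∧ a = e1 w ∧ b = e2 w ∧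
    ∀ w', A w' → Same X x y (e1 w) (e2 w) (e1 w') (e2 w') → x w' ≤ x w

def S2 (X : Finset ι) (x y : ι → ℝ) (e1 e2 : ι → ι) (A : ι → Prop) (w a b : ι) : Prop :=
  A w ∧ b = e2 w ∧ ∃ w', A w' ∧ (ZS X x y (e1 w) (e2 w) (e1 w') (e2 w') a ∨
    ZS X x (fun i => - y i) (e1 w) (e2 w) (e1 w') (e2 w') a)

def S3 (X : Finset ι) (x y : ι → ℝ) (V1 U1 : ι → ι) (D : ι → Prop) (w a b : ι) : Prop :=
  D w ∧ a = V1 w ∧ b = w ∧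
    (∃ g ∈ X, x (V1 w) < x g ∧ x g < x w ∧ y (V1 w) < y g ∧ y g < y (U1 w)) ∧
    ∀ w', D w' → x w' = x w → x (V1 w') = x (V1 w) → y w ≤ y w'

def S4 (X : Finset ι) (x y : ι → ℝ) (V1 U1 U2 : ι → ι) (D : ι → Prop) (w a b : ι) : Prop :=
  D w ∧ (a = V1 w ∧ b = U2 w ∨ a = U1 w ∧ b = w) ∧ RGood X x y (V1 w) (U1 w) w a b

theorem S_exA (C : Ctx X x y e1 e2 V1 U1 U2 A D) {w : ι} (h : A w) :
    ∃ a b, S1 X x y e1 e2 A w a b ∨ S2 X x y e1 e2 A w a b := by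
  by_cases hl : ∀ w', A w' → Same X x y (e1 w) (e2 w) (e1 w') (e2 w') → x w' ≤ x w
  · exact ⟨_, _, Or.inl ⟨h, rfl, rfl, hl⟩⟩
  push Not at hl
  obtain ⟨w', h', hs, hlt⟩ := hl
  have a := C.hA w h
  have a' := C.hA w' h'
  have b := C.hAx w h
  have b' := C.hAx w' h'
  have hx := a.hx
  obtain ⟨k, hk, hk'⟩ := C.NU _ a.hp _ a.hq (by intro he; rw [he] at hx; exact lt_irrefl _ hx)
  obtain ⟨z, hz, hmin⟩ := Finset.exists_min_image (X.filter fun i => ¬ Col x y (e1 w) (e2 w) i) x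
    ⟨k, by simp [hk, hk']⟩
  simp only [Finset.mem_filter, and_imp] at hz hmin
  refine ⟨z, e2 w, Or.inr ⟨h, rfl, w', h', ?_⟩⟩
  by_cases hy : y (e1 w) < y (e2 w)
  · left
    have o := AA_order a a' hy hs (by grind)
    exact ⟨a, a', hy, AA_orient a a' hy hs, hs, o.1, o.2, hz.1, hz.2, hmin⟩
  · right
    have hy' : (fun i => - y i) (e1 w) < (fun i => - y i) (e2 w) := by
      have := a.hy; grind
    have hs' := Same_neg.2 hs
    have o := AA_order a.neg a'.neg hy' hs' (by grind)
    refine ⟨a.neg, a'.neg, hy', AA_orient (y := fun i => - y i) a.neg a'.neg hy' hs', hs', o.1, o.2, hz.1, ?_, ?_⟩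
    · rw [Col_neg]; exact hz.2
    · simp only [Col_neg]; exact hmin

theorem S_exD (C : Ctx X x y e1 e2 V1 U1 U2 A D) {w : ι} (h : D w) :
    ∃ a b, S3 X x y V1 U1 D w a b ∨ S4 X x y V1 U1 U2 D w a b := by
  have R := C.hD w h
  by_cases hg : ∃ g ∈ X, x (V1 w) < x g ∧ x g < x w ∧ y (V1 w) < y g ∧ y g < y (U1 w)
  · by_cases hl : ∀ w', D w' → x w' = x w → x (V1 w') = x (V1 w) → y w ≤ y w'
    · exact ⟨_, _, Or.inl ⟨h, rfl, rfl, hg, hl⟩⟩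
    push Not at hl
    obtain ⟨w', h', k1, k2, k3⟩ := hl
    have R' := C.hD w' h'
    have := R.y1
    have := R'.y1
    exact ⟨_, _, Or.inr ⟨h, Or.inl ⟨rfl, rfl⟩, D_ii R R' k2 k1 (by grind) (C.hDF w' h')⟩⟩
  · rcases D_iii C.NU R (fun g h1 h2 h3 h4 h5 => hg ⟨g, h1, h2, h3, h4, h5⟩) with h1 | h1
    · exact ⟨_, _, Or.inr ⟨h, Or.inl ⟨rfl, rfl⟩, h1⟩⟩
    · exact ⟨_, _, Or.inr ⟨h, Or.inr ⟨rfl, rfl⟩, h1⟩⟩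

variable {w w' a b a' b' : ι}

theorem S11 (C : Ctx X x y e1 e2 V1 U1 U2 A D) (h : S1 X x y e1 e2 A w a b)
    (h' : S1 X x y e1 e2 A w' a' b') (hs : Same X x y a b a' b') : w = w' := by
  obtain ⟨k1, rfl, rfl, k2⟩ := h
  obtain ⟨k1', rfl, rfl, k2'⟩ := h'
  exact C.hAu _ _ k1 k1' (le_antisymm (k2' _ k1 hs.symm) (k2 _ k1' hs))

theorem S12 (C : Ctx X x y e1 e2 V1 U1 U2 A D) (h : S1 X x y e1 e2 A w a b)
    (h' : S2 X x y e1 e2 A w' a' b') (hs : Same X x y a b a' b') : False := by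
  obtain ⟨k1, rfl, rfl, k2⟩ := h
  obtain ⟨k1', rfl, w2, k2', k3⟩ := h'
  have U1 : x (e1 w) = x (e1 w2) → e1 w = e1 w2 ∧ e2 w = e2 w2 := by
    rw [C.hAx w k1, C.hAx w2 k2']
    intro he
    rw [C.hAu _ _ k1 k2' he]; exact ⟨rfl, rfl⟩
  have U2 : x (e2 w) = x (e2 w') → e1 w = e1 w' ∧ e2 w = e2 w' := by
    intro he
    rw [C.e2inj k1 k1' he]; exact ⟨rfl, rfl⟩
  rcases k3 with k3 | k3
  · exact ZA k3 (C.hA w k1) U1 U2 hs.symm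
  · exact ZA k3 (C.hA w k1).neg U1 U2 (Same_neg.2 hs.symm)

theorem S22 (C : Ctx X x y e1 e2 V1 U1 U2 A D) (h : S2 X x y e1 e2 A w a b)
    (h' : S2 X x y e1 e2 A w' a' b') (hs : Same X x y a b a' b') : w = w' := by
  obtain ⟨k1, rfl, w1, k2, k3⟩ := h
  obtain ⟨k1', rfl, w2, k2', k3'⟩ := h'
  by_contra hne
  have hne' : x (e2 w) ≠ x (e2 w') := fun he => hne (C.e2inj k1 k1' he)
  rcases k3 with k3 | k3 <;> rcases k3' with k3' | k3'
  · rcases lt_or_gt_of_ne hne' with hl | hl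
    · exact ZZ_same k3 k3' hl hs
    · exact ZZ_same k3' k3 hl hs.symm
  · exact ZZ_opp k3 k3' hne' hs
  · exact ZZ_opp k3' k3 hne'.symm hs.symm
  · rcases lt_or_gt_of_ne hne' with hl | hl
    · exact ZZ_same k3 k3' hl (Same_neg.2 hs)
    · exact ZZ_same k3' k3 hl (Same_neg.2 hs.symm)

theorem ZS.ne {p q p' q' z : ι} (h : ZS X x y p q p' q' z) : x z ≠ x q ∧ y z ≠ y q := by
  have := h.zpos
  have := h.o1
  have := h.o2
  grind

theorem S2.ne (h : S2 X x y e1 e2 A w a b) : x a ≠ x b ∧ y a ≠ y b := by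
  obtain ⟨k1, rfl, w1, k2, k3 | k3⟩ := h
  · exact k3.ne
  · simpa using k3.ne

theorem S1.ne (C : Ctx X x y e1 e2 V1 U1 U2 A D) (h : S1 X x y e1 e2 A w a b) :
    x a ≠ x b ∧ y a ≠ y b := by
  obtain ⟨k1, rfl, rfl, k2⟩ := h
  exact ⟨(C.hA w k1).hx.ne, (C.hA w k1).hy⟩

theorem S4.ne (C : Ctx X x y e1 e2 V1 U1 U2 A D) (h : S4 X x y V1 U1 U2 D w a b) :
    x a ≠ x b ∧ y a ≠ y b := by
  obtain ⟨k1, k2, k3⟩ := h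
  obtain ⟨m1, m2, m3, m4, a1, a2, a3, a4, a5, a6, -, -⟩ := C.hD w k1
  rcases k2 with ⟨rfl, rfl⟩ | ⟨rfl, rfl⟩ <;> grind

theorem S3x (C : Ctx X x y e1 e2 V1 U1 U2 A D) (h : S3 X x y V1 U1 D w a b)
    (hn : x a' ≠ x b' ∧ y a' ≠ y b') (hs : Same X x y a b a' b') : False := by
  obtain ⟨k1, rfl, rfl, ⟨g, g0, g1, g2, g3, g4⟩, k4⟩ := h
  exact N_gen (C.hD _ k1) g0 g1 g2 g3 g4 hn.1 hn.2 hs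

theorem S33 (C : Ctx X x y e1 e2 V1 U1 U2 A D) (h : S3 X x y V1 U1 D w a b)
    (h' : S3 X x y V1 U1 D w' a' b') (hs : Same X x y a b a' b') : w = w' := by
  obtain ⟨k1, rfl, rfl, ⟨g, g0, g1, g2, g3, g4⟩, k4⟩ := h
  obtain ⟨k1', rfl, rfl, ⟨g', g0', g1', g2', g3', g4'⟩, k4'⟩ := h'
  have R := C.hD _ k1
  have R' := C.hD _ k1'
  have hh := N_N R g0 g1 g2 g3 g4 R' g0' g1' g2' g3' g4' hs
  exact C.inj _ R.m3 _ R'.m3 hh.2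
    (le_antisymm (k4 _ k1' hh.2.symm hh.1.symm) (k4' _ k1 hh.2 hh.1))

theorem S41 (C : Ctx X x y e1 e2 V1 U1 U2 A D) (h : S4 X x y V1 U1 U2 D w a b)
    (h' : S1 X x y e1 e2 A w' a' b') (hs : Same X x y a b a' b') : False := by
  obtain ⟨k1, k2, k3⟩ := h
  obtain ⟨k1', rfl, rfl, -⟩ := h'
  exact k3.1 _ _ (C.hA _ k1') hs

theorem S42 (C : Ctx X x y e1 e2 V1 U1 U2 A D) (h : S4 X x y V1 U1 U2 D w a b)
    (h' : S2 X x y e1 e2 A w' a' b') (hs : Same X x y a b a' b') : False := by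
  obtain ⟨k1, k2, k3⟩ := h
  obtain ⟨k1', rfl, w2, k2', k3'⟩ := h'
  have R := C.hD _ k1
  rcases k3' with k3' | k3' <;> rcases k2 with ⟨rfl, rfl⟩ | ⟨rfl, rfl⟩
  · exact ZD_inc k3' R hs.symm
  · exact ZD_dec k3' R hs.symm
  · exact ZD_dec k3' R.neg (Same_neg.2 hs.symm)
  · exact ZD_inc k3' R.neg (Same_neg.2 hs.symm)

theorem S44 (C : Ctx X x y e1 e2 V1 U1 U2 A D) (h : S4 X x y V1 U1 U2 D w a b)
    (h' : S4 X x y V1 U1 U2 D w' a' b') (hs : Same X x y a b a' b') : w = w' := by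
  obtain ⟨k1, -, k3⟩ := h
  obtain ⟨k1', k2', -⟩ := h'
  have R := C.hD _ k1
  have R' := C.hD _ k1'
  by_contra hne
  have := k3.2 _ _ _ _ R' (by
    rintro ⟨-, h1, h2, -⟩
    exact hne (C.inj _ R.m3 _ R'.m3 h1 (by rw [R.y1, R'.y1, h2])))
  rcases k2' with ⟨rfl, rfl⟩ | ⟨rfl, rfl⟩
  · exact this.1 hs
  · exact this.2 hs

theorem exists_f (C : Ctx X x y e1 e2 V1 U1 U2 A D) :
    ∃ f : ι → ι × ι, (∀ w, A w ∨ D w → (f w).1 ∈ X ∧ (f w).2 ∈ X ∧ (f w).1 ≠ (f w).2) ∧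
      ∀ w w', A w ∨ D w → A w' ∨ D w' →
        Same X x y (f w).1 (f w).2 (f w').1 (f w').2 → w = w' := by
  have key : ∀ w, ∃ p : ι × ι, A w ∨ D w →
      (S1 X x y e1 e2 A w p.1 p.2 ∨ S2 X x y e1 e2 A w p.1 p.2) ∨
      (S3 X x y V1 U1 D w p.1 p.2 ∨ S4 X x y V1 U1 U2 D w p.1 p.2) := by
    intro w
    by_cases hw : A w ∨ D w
    · rcases hw with hw | hw
      · obtain ⟨a, b, h⟩ := S_exA C hw
        exact ⟨(a, b), fun _ => Or.inl h⟩
      · obtain ⟨a, b, h⟩ := S_exD C hw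
        exact ⟨(a, b), fun _ => Or.inr h⟩
    · exact ⟨(w, w), fun h => absurd h hw⟩
  choose f hf using key
  refine ⟨f, ?_, ?_⟩
  · intro w hw
    have ne : x (f w).1 ≠ x (f w).2 → (f w).1 ≠ (f w).2 := fun h1 h2 => h1 (by rw [h2])
    rcases hf w hw with (h | h) | (h | h)
    · have hn := (S1.ne C h).1
      obtain ⟨k1, k2, k3, -⟩ := h
      refine ⟨?_, ?_, ne hn⟩
      · rw [k2]; exact (C.hA w k1).hp
      · rw [k3]; exact (C.hA w k1).hq
    · have hn := (S2.ne h).1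
      obtain ⟨k1, k3, w2, -, k4⟩ := h
      refine ⟨?_, ?_, ne hn⟩
      · rcases k4 with k4 | k4 <;> exact k4.hz
      · rw [k3]; exact (C.hA w k1).hq
    · obtain ⟨k1, k2, k3, -⟩ := h
      have R := C.hD w k1
      refine ⟨?_, ?_, ne ?_⟩
      · rw [k2]; exact R.m1
      · rw [k3]; exact R.m3
      · rw [k2, k3]; exact R.xl.ne
    · have hn := (S4.ne C h).1
      obtain ⟨k1, k2, -⟩ := h
      have R := C.hD w k1
      rcases k2 with ⟨k2, k3⟩ | ⟨k2, k3⟩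
      · exact ⟨by rw [k2]; exact R.m1, by rw [k3]; exact R.m4, ne hn⟩
      · exact ⟨by rw [k2]; exact R.m2, by rw [k3]; exact R.m3, ne hn⟩
  · intro w w' hw hw' hs
    rcases hf w hw with (h | h) | (h | h) <;> rcases hf w' hw' with (h' | h') | (h' | h')
    · exact S11 C h h' hs
    · exact (S12 C h h' hs).elim
    · exact (S3x C h' (S1.ne C h) hs.symm).elim
    · exact (S41 C h' h hs.symm).elim
    · exact (S12 C h' h hs.symm).elim
    · exact S22 C h h' hs
    · exact (S3x C h' (S2.ne h) hs.symm).elim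
    · exact (S42 C h' h hs.symm).elim
    · exact (S3x C h (S1.ne C h') hs).elim
    · exact (S3x C h (S2.ne h') hs).elim
    · exact S33 C h h' hs
    · exact (S3x C h (S4.ne C h') hs).elim
    · exact (S41 C h h' hs).elim
    · exact (S42 C h h' hs).elim
    · exact (S3x C h' (S4.ne C h) hs.symm).elim
    · exact S44 C h h' hs
end
end LinfAux
namespace LinfAux
variable {ι : Type}

section
variable {X : Finset ι} {x y : ι → ℝ}

/-- `u` is the next point above `w` in its column -/
def Up (X : Finset ι) (x y : ι → ℝ) (w u : ι) : Prop :=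
  u ∈ X ∧ x u = x w ∧ y w < y u ∧ ∀ k ∈ X, x k = x w → y k ≤ y w ∨ y u ≤ y k

theorem exists_up {w k : ι} (hk : k ∈ X) (hx : x k = x w) (hy : y w < y k) :
    ∃ u, Up X x y w u := by
  obtain ⟨u, hu, hmin⟩ := Finset.exists_min_image (X.filter fun i => x i = x w ∧ y w < y i) y
    ⟨k, by simp [hk, hx, hy]⟩
  simp only [Finset.mem_filter, and_imp] at hu hmin
  refine ⟨u, hu.1, hu.2.1, hu.2.2, fun k hk hx => ?_⟩
  have := hmin k hk hx
  grind

theorem exists_edge (inj : ∀ a ∈ X, ∀ b ∈ X, x a = x b → y a = y b → a = b)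
    (NU : ∀ u ∈ X, ∀ v ∈ X, u ≠ v → ∃ w ∈ X, ¬ Col x y u v w) {w k : ι} (hw : w ∈ X)
    (hk : k ∈ X) (hx : x w < x k) : ∃ p q, AdjE X x y p q ∧ x p = x w := by
  obtain ⟨n, hn, hmin⟩ := Finset.exists_min_image (X.filter fun i => x w < x i) x
    ⟨k, by simp [hk, hx]⟩
  simp only [Finset.mem_filter, and_imp] at hn hmin
  obtain ⟨⟨p, q⟩, hpq, hm⟩ := Finset.exists_min_image
    ((X ×ˢ X).filter fun r => x r.1 = x w ∧ x r.2 = x n) (fun r => |y r.1 - y r.2|)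
    ⟨(w, n), by simp [hw, hn]⟩
  simp only [Finset.mem_filter, Finset.mem_product, and_imp, Prod.forall] at hpq hm
  obtain ⟨⟨hp, hq⟩, hpx, hqx⟩ := hpq
  have hlt : x p < x q := by grind
  have hadj : ∀ i ∈ X, x i ≤ x p ∨ x q ≤ x i := by
    intro i hi
    have := hmin i hi
    grind
  refine ⟨p, q, ⟨hp, hq, hlt, ?_, hadj, ?_⟩, hpx⟩
  · intro he
    obtain ⟨i, hi, hi'⟩ := NU p hp q hq (by intro h; rw [h] at hlt; exact lt_irrefl _ hlt)
    rw [colHor hlt he] at hi'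
    have := hadj i hi
    grind
  · intro i hi hb
    unfold Bx at hb
    have h1 := hadj i hi
    have h2 : x i = x p ∨ x i = x q := by grind
    rcases h2 with h2 | h2
    · left
      have h3 := hm i q hi hq (by grind) hqx
      apply inj i hi p hp h2
      rcases abs_cases (y p - y q) with ⟨e1, _⟩ | ⟨e1, _⟩ <;>
      rcases abs_cases (y i - y q) with ⟨e2, _⟩ | ⟨e2, _⟩ <;> grind
    · right
      have h3 := hm p i hp hi hpx (by grind)
      apply inj i hi q hq h2
      rcases abs_cases (y p - y q) with ⟨e1, _⟩ | ⟨e1, _⟩ <;>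
      rcases abs_cases (y p - y i) with ⟨e2, _⟩ | ⟨e2, _⟩ <;> grind

def DD (X : Finset ι) (x y : ι → ℝ) (w : ι) : Prop :=
  ∃ v1 u1 u2, Rc X x y v1 u1 w u2 ∧ First X x y v1 u1

def AA (X : Finset ι) (x y : ι → ℝ) (w : ι) : Prop :=
  w ∈ X ∧ (∀ k ∈ X, x k = x w → y k ≤ y w) ∧ ∃ k ∈ X, x w < x k

def VV (X : Finset ι) (x y : ι → ℝ) (w : ι) : Prop :=
  w ∈ X ∧ (∃ k ∈ X, x k = x w ∧ y w < y k) ∧ ¬ DD X x y w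

theorem exists_f' (inj : ∀ a ∈ X, ∀ b ∈ X, x a = x b → y a = y b → a = b)
    (NU : ∀ u ∈ X, ∀ v ∈ X, u ≠ v → ∃ w ∈ X, ¬ Col x y u v w) :
    ∃ f : ι → ι × ι, (∀ w, AA X x y w ∨ DD X x y w →
        (f w).1 ∈ X ∧ (f w).2 ∈ X ∧ (f w).1 ≠ (f w).2) ∧
      ∀ w w', AA X x y w ∨ DD X x y w → AA X x y w' ∨ DD X x y w' →
        Same X x y (f w).1 (f w).2 (f w').1 (f w').2 → w = w' := by
  have h1 : ∀ w, ∃ p q, AA X x y w → AdjE X x y p q ∧ x p = x w := by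
    intro w
    by_cases h : AA X x y w
    · obtain ⟨a, -, k, b, c⟩ := h
      obtain ⟨p, q, hh⟩ := exists_edge inj NU a b c
      exact ⟨p, q, fun _ => hh⟩
    · exact ⟨w, w, fun h' => absurd h' h⟩
  have h2 : ∀ w, ∃ v1 u1 u2, DD X x y w → Rc X x y v1 u1 w u2 ∧ First X x y v1 u1 := by
    intro w
    by_cases h : DD X x y w
    · obtain ⟨a, b, c, hh⟩ := h
      exact ⟨a, b, c, fun _ => hh⟩
    · exact ⟨w, w, w, fun h' => absurd h' h⟩
  choose e1 e2 he using h1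
  choose V1 U1 U2 hV using h2
  apply exists_f (e1 := e1) (e2 := e2) (V1 := V1) (U1 := U1) (U2 := U2)
  refine ⟨inj, NU, fun w h => (he w h).1, fun w h => (he w h).2, ?_, fun w h => (hV w h).1,
    fun w h => (hV w h).2⟩
  intro w w' h h' hx
  exact inj _ h.1 _ h'.1 hx (le_antisymm (h'.2.1 _ h.1 hx) (h.2.1 _ h'.1 hx.symm))

theorem mkD {w w' u u' : ι} (hw : w ∈ X) (hw' : w' ∈ X) (h : Up X x y w u) (h' : Up X x y w' u')
    (e1 : y w = y w') (e2 : y u = y u') (hl : x w < x w') : DD X x y w' := by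
  obtain ⟨v, hv, hmin⟩ := Finset.exists_min_image
    (X.filter fun i => ∃ j, Up X x y i j ∧ y i = y w' ∧ y j = y u') x
    ⟨w, by simp only [Finset.mem_filter]; exact ⟨hw, u, h, e1, e2⟩⟩
  simp only [Finset.mem_filter, and_imp, forall_exists_index] at hv hmin
  obtain ⟨hvX, j, hj, e3, e4⟩ := hv
  have hm := hmin w hw u h e1 e2
  refine ⟨v, j, u', ⟨hvX, hj.1, hw', h'.1, hj.2.1, h'.2.1, by grind, by grind, by grind, hj.2.2.1,
    hj.2.2.2, ?_⟩, ?_⟩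
  · intro k hk hx
    have := h'.2.2.2 k hk hx
    grind
  · intro a ha b hb k1 k2 k3 k4
    by_contra hcon
    push Not at hcon
    have hy := hj.2.2.1
    have := hmin a ha b ⟨hb, k1, by grind, fun k hk hkx => by
      have := hcon k hk hkx
      grind⟩ (by grind) (by grind)
    grind

theorem Vinj (inj : ∀ a ∈ X, ∀ b ∈ X, x a = x b → y a = y b → a = b)
    (NU : ∀ u ∈ X, ∀ v ∈ X, u ≠ v → ∃ w ∈ X, ¬ Col x y u v w) {w w' u u' : ι}
    (h : VV X x y w) (h' : VV X x y w') (hu : Up X x y w u) (hu' : Up X x y w' u')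
    (hs : Same X x y w u w' u') : w = w' := by
  have c := fun z => @colVert ι x y w u hu.2.1.symm hu.2.2.1 z
  have c' := fun z => @colVert ι x y w' u' hu'.2.1.symm hu'.2.2.1 z
  have hyl := hu.2.2.1
  have hyl' := hu'.2.2.1
  obtain ⟨z, hz, hn⟩ := NU w h.1 u hu.1 (by intro he; rw [he] at hyl; exact lt_irrefl _ hyl)
  have hn' : ¬ Col x y w' u' z := by rwa [← hs z hz]
  rw [c] at hn
  rw [c'] at hn'
  have d1 := (hs _ h'.1).2 (Col_left ..)
  have d2 := (hs _ hu'.1).2 (Col_right ..)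
  have d3 := (hs _ h.1).1 (Col_left ..)
  have d4 := (hs _ hu.1).1 (Col_right ..)
  rw [c] at d1 d2
  rw [c'] at d3 d4
  have d1 : y w' ≤ y w ∨ y u ≤ y w' := d1.elim Or.inl fun d => d.elim Or.inr (hu.2.2.2 _ h'.1)
  have d2 : y u' ≤ y w ∨ y u ≤ y u' := d2.elim Or.inl fun d => d.elim Or.inr (hu.2.2.2 _ hu'.1)
  have d3 : y w ≤ y w' ∨ y u' ≤ y w := d3.elim Or.inl fun d => d.elim Or.inr (hu'.2.2.2 _ h.1)
  have d4 : y u ≤ y w' ∨ y u' ≤ y u := d4.elim Or.inl fun d => d.elim Or.inr (hu'.2.2.2 _ hu.1)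
  clear c c' hs NU
  push Not at hn hn'
  obtain ⟨n1, n2, -⟩ := hn
  obtain ⟨n1', n2', -⟩ := hn'
  have e1 : y w = y w' := by
    rcases d1 with d1 | d1 <;> rcases d3 with d3 | d3 <;> linarith
  have e2 : y u = y u' := by
    rcases d2 with d2 | d2 <;> rcases d4 with d4 | d4 <;> linarith
  rcases lt_trichotomy (x w) (x w') with hl | hl | hl
  · exact absurd (mkD h.1 h'.1 hu hu' e1 e2 hl) h'.2.2
  · exact inj _ h.1 _ h'.1 hl e1
  · exact absurd (mkD h'.1 h.1 hu' hu e1.symm e2.symm hl) h.2.2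

theorem count [DecidableEq ι] (inj : ∀ a ∈ X, ∀ b ∈ X, x a = x b → y a = y b → a = b)
    (NU : ∀ u ∈ X, ∀ v ∈ X, u ≠ v → ∃ w ∈ X, ¬ Col x y u v w) (h2 : 2 ≤ X.card)
    (l : ι → ι → Finset ι) (hl : ∀ u ∈ X, ∀ v ∈ X, u ≠ v → ∀ z, z ∈ l u v ↔ z ∈ X ∧ Col x y u v z)
    (L : Finset (Finset ι)) (hL : ∀ u ∈ X, ∀ v ∈ X, u ≠ v → l u v ∈ L) : X.card ≤ 2 * L.card := by
  classical
  have lS : ∀ a ∈ X, ∀ b ∈ X, a ≠ b → ∀ c ∈ X, ∀ d ∈ X, c ≠ d → l a b = l c d →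
      Same X x y a b c d := by
    intro a ha b hb hab c hc d hd hcd he z hz
    have e1 := hl a ha b hb hab z
    have e2 := hl c hc d hd hcd z
    rw [he] at e1
    exact ⟨fun h => (e2.1 (e1.2 ⟨hz, h⟩)).2, fun h => (e1.1 (e2.2 ⟨hz, h⟩)).2⟩
  -- first count
  obtain ⟨f, f1, f2⟩ := exists_f' inj NU
  have c1 : (X.filter fun w => AA X x y w ∨ DD X x y w).card ≤ L.card := by
    apply Finset.card_le_card_of_injOn (fun w => l (f w).1 (f w).2)
    · intro w hw
      have hw' := (Finset.mem_filter.1 hw).2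
      obtain ⟨a, b, c⟩ := f1 w hw'
      exact hL _ a _ b c
    · intro w hw w' hw' he
      have k := (Finset.mem_filter.1 hw).2
      have k' := (Finset.mem_filter.1 hw').2
      obtain ⟨a, b, c⟩ := f1 w k
      obtain ⟨a', b', c'⟩ := f1 w' k'
      exact f2 w w' k k' (lS _ a _ b c _ a' _ b' c' he)
  -- second count
  have hne : X.Nonempty := Finset.card_pos.1 (by omega)
  have hup : ∀ w, ∃ u, VV X x y w → Up X x y w u := by
    intro w
    by_cases h : VV X x y w
    · obtain ⟨-, ⟨k, a, b, c⟩, -⟩ := h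
      obtain ⟨u, hu⟩ := exists_up a b c
      exact ⟨u, fun _ => hu⟩
    · exact ⟨w, fun h' => absurd h' h⟩
  choose up hup using hup
  have upne : ∀ w, VV X x y w → w ≠ up w := by
    intro w h he
    have := (hup w h).2.2.1
    rw [← he] at this
    exact lt_irrefl _ this
  obtain ⟨t, ht, htm⟩ := Finset.exists_max_image X y hne
  obtain ⟨b, hb, hbm⟩ := Finset.exists_min_image X y hne
  have htb : t ≠ b := by
    intro he
    obtain ⟨u, hu, v, hv, huv⟩ := Finset.one_lt_card.1 h2
    obtain ⟨w, hw, hn⟩ := NU u hu v hv huv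
    apply hn
    have a1 := htm u hu
    have a2 := htm v hv
    have a3 := htm w hw
    have b1 := hbm u hu
    have b2 := hbm v hv
    have b3 := hbm w hw
    rw [he] at a1 a2 a3
    unfold Col Bx
    grind
  obtain ⟨w0, hw0, hn0⟩ := NU t ht b hb htb
  have htw : t ≠ w0 := by
    rintro rfl
    exact hn0 (Col_left ..)
  have hn1 : ¬ Col x y t w0 b := by
    intro h
    apply hn0
    rw [Col_comm] at h
    revert h
    unfold Col Bx
    grind
  have c2 : (X.filter fun w => VV X x y w).card + 1 ≤ L.card := by
    have hi : Set.InjOn (fun w => l w (up w)) (X.filter fun w => VV X x y w : Finset ι) := by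
      intro w hw w' hw' he
      have k := (Finset.mem_filter.1 hw).2
      have k' := (Finset.mem_filter.1 hw').2
      exact Vinj inj NU k k' (hup w k) (hup w' k')
        (lS _ k.1 _ (hup w k).1 (upne w k) _ k'.1 _ (hup w' k').1 (upne w' k') he)
    rw [← Finset.card_image_of_injOn hi, ← Finset.card_insert_of_notMem (a := l t w0)]
    · apply Finset.card_le_card
      intro s hs
      rcases Finset.mem_insert.1 hs with rfl | hs
      · exact hL _ ht _ hw0 htw
      · obtain ⟨w, hw, rfl⟩ := Finset.mem_image.1 hs
        have k := (Finset.mem_filter.1 hw).2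
        exact hL _ k.1 _ (hup w k).1 (upne w k)
    · intro hs
      obtain ⟨w, hw, he⟩ := Finset.mem_image.1 hs
      have k := (Finset.mem_filter.1 hw).2
      have hh := lS _ k.1 _ (hup w k).1 (upne w k) _ ht _ hw0 htw he
      apply hn1
      rw [← hh b hb, colVert (hup w k).2.1.symm (hup w k).2.2.1]
      exact Or.inl (hbm _ k.1)
  have c3 : (X.filter fun w => ¬ (AA X x y w ∨ DD X x y w) ∧ ¬ VV X x y w).card ≤ 1 := by
    rw [Finset.card_le_one]
    have hh : ∀ w ∈ X, ¬ (AA X x y w ∨ DD X x y w) → ¬ VV X x y w →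
        (∀ k ∈ X, x k = x w → y k ≤ y w) ∧ ∀ k ∈ X, x k ≤ x w := by
      intro w hw h1 h2
      have ht : ∀ k ∈ X, x k = x w → y k ≤ y w := by
        intro k hk hx
        by_contra hc
        exact h2 ⟨hw, ⟨k, hk, hx, not_le.1 hc⟩, fun h => h1 (Or.inr h)⟩
      refine ⟨ht, fun k hk => ?_⟩
      by_contra hc
      exact h1 (Or.inl ⟨hw, ht, k, hk, not_le.1 hc⟩)
    intro a ha b hb
    obtain ⟨a1, a2, a3⟩ := Finset.mem_filter.1 ha
    obtain ⟨b1, b2, b3⟩ := Finset.mem_filter.1 hb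
    obtain ⟨a4, a5⟩ := hh a a1 a2 a3
    obtain ⟨b4, b5⟩ := hh b b1 b2 b3
    have hx := le_antisymm (b5 a a1) (a5 b b1)
    exact inj a a1 b b1 hx (le_antisymm (b4 a a1 hx) (a4 b b1 hx.symm))
  have c4 : X.card ≤ (X.filter fun w => AA X x y w ∨ DD X x y w).card +
      (X.filter fun w => VV X x y w).card +
      (X.filter fun w => ¬ (AA X x y w ∨ DD X x y w) ∧ ¬ VV X x y w).card := by
    refine le_trans (Finset.card_le_card (t := ((X.filter fun w => AA X x y w ∨ DD X x y w) ∪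
      (X.filter fun w => VV X x y w)) ∪
      (X.filter fun w => ¬ (AA X x y w ∨ DD X x y w) ∧ ¬ VV X x y w)) ?_) ?_
    · intro w hw
      simp only [Finset.mem_union, Finset.mem_filter]
      tauto
    · exact le_trans (Finset.card_union_le _ _) (Nat.add_le_add_right (Finset.card_union_le _ _) _)
  omega
end
end LinfAux
namespace LinfAux

def cx (p : ℝ × ℝ) : ℝ := p.1 + p.2
def cy (p : ℝ × ℝ) : ℝ := p.1 - p.2

theorem max_abs (a b : ℝ) : 2 * max |a| |b| = |a + b| + |a - b| := by
  rcases abs_cases a with ⟨e1, _⟩ | ⟨e1, _⟩ <;> rcases abs_cases b with ⟨e2, _⟩ | ⟨e2, _⟩ <;>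
  rcases abs_cases (a + b) with ⟨e3, _⟩ | ⟨e3, _⟩ <;>
  rcases abs_cases (a - b) with ⟨e4, _⟩ | ⟨e4, _⟩ <;>
  rcases max_cases |a| |b| with ⟨e5, _⟩ | ⟨e5, _⟩ <;> linarith

theorem rho_eq (u v : ℝ × ℝ) : 2 * rhoInf u v = |cx u - cx v| + |cy u - cy v| := by
  unfold rhoInf cx cy
  rw [max_abs]
  congr 2 <;> ring

theorem abs_btw (a b c : ℝ) : |a - c| ≤ |a - b| + |b - c| ∧
    (|a - b| + |b - c| ≤ |a - c| ↔ (a ≤ b ∧ b ≤ c ∨ c ≤ b ∧ b ≤ a)) := by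
  refine ⟨abs_sub_le a b c, ?_⟩
  rcases abs_cases (a - b) with ⟨e1, _⟩ | ⟨e1, _⟩ <;>
  rcases abs_cases (b - c) with ⟨e2, _⟩ | ⟨e2, _⟩ <;>
  rcases abs_cases (a - c) with ⟨e3, _⟩ | ⟨e3, _⟩ <;> rw [e1, e2, e3] <;> grind

theorem rho_btw (u z v : ℝ × ℝ) : rhoInf u v = rhoInf u z + rhoInf z v ↔ Bx cx cy u z v := by
  have h1 := rho_eq u v
  have h2 := rho_eq u z
  have h3 := rho_eq z v
  have a := abs_btw (cx u) (cx z) (cx v)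
  have b := abs_btw (cy u) (cy z) (cy v)
  unfold Bx
  rw [← a.2, ← b.2]
  constructor
  · intro h
    constructor <;> linarith [a.1, b.1]
  · rintro ⟨h, h'⟩
    linarith [a.1, b.1]

theorem mem_line (X : Finset (ℝ × ℝ)) (u v : ℝ × ℝ) (huv : u ≠ v) (z : ℝ × ℝ) :
    z ∈ lineThrough X u v ↔ z ∈ X ∧ Col cx cy u v z := by
  unfold lineThrough
  rw [Finset.mem_filter]
  apply and_congr_right
  intro _
  by_cases h1 : z = u
  · subst h1
    simp [Col_left]
  by_cases h2 : z = v
  · subst h2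
    simp [Col_right]
  unfold MBtw
  rw [rho_btw, rho_btw, rho_btw]
  unfold Col
  have := Ne.symm h1
  have := Ne.symm h2
  tauto

end LinfAux

/-- A non-collinear set of `n ≥ 2` points in the plane with the L∞ metric
induces at least `⌈n/2⌉` lines. -/
theorem Linf_many_lines (X : Finset (ℝ × ℝ)) (n : ℕ) (hn : X.card = n) (h2 : 2 ≤ n)
    (huniv : ∀ u ∈ X, ∀ v ∈ X, u ≠ v → lineThrough X u v ≠ X) :
    (n + 1) / 2 ≤ numLines X := by
  have key : X.card ≤ 2 * numLines X := by
    unfold numLines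
    apply LinfAux.count (x := LinfAux.cx) (y := LinfAux.cy) (l := lineThrough X)
    · intro a _ b _ h1 h2
      unfold LinfAux.cx at h1
      unfold LinfAux.cy at h2
      exact Prod.ext (by linarith) (by linarith)
    · intro u hu v hv huv
      by_contra hc
      push Not at hc
      apply huniv u hu v hv huv
      ext z
      rw [LinfAux.mem_line X u v huv]
      exact ⟨fun h => h.1, fun h => ⟨h, hc z h⟩⟩
    · omega
    · intro u _ v _ huv z
      exact LinfAux.mem_line X u v huv z
    · intro u hu v hv huv
      exact Finset.mem_image.2 ⟨(u, v), by simp [hu, hv, huv], rfl⟩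
  omega
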